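/- Let G be a complete bipartite weighted graph between agents N and items I with nonnegative edge weights v_a(b), and let M be a maximum-weight matching of G. Define a directed graph R on vertex set I where, for each matched pair (a,b) in M and each item b' ≠ b, there is an edge from b to b' with weight v_a(b) − v_a(b'). Then R contains no directed cycle of negative total weight. -/

import Mathlib

/-! Rotating the matching along the cycle gives another matching. If `σ` is the permutation of the
items with `σ (c j) = c (j + 1)` that fixes every item off the cycle, then assigning `m b` to `σ b`
changes the weight of the matching by exactly minus the weight of the cycle, so maximality of `m`
makes the weight of the cycle nonnegative. -/

/-- In the relation graph built from a maximum-weight matching of a complete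
bipartite weighted graph (agents `N`, items `I`, nonnegative weights `v`), where the matching
is modelled by an equivalence `m : I ≃ N` (agent `m b` is matched to item `b`, matching all
items), every directed cycle (on distinct items) has nonnegative total weight.  The edge from
`b` to `b'` has weight `v (m b) b - v (m b) b'`. -/
theorem stmt_0 {N I : Type*} [Fintype N] [Fintype I]
    (v : N → I → ℝ) (hv : ∀ a b, 0 ≤ v a b)
    (m : I ≃ N)
    (hmax : ∀ m' : I ≃ N, ∑ b, v (m' b) b ≤ ∑ b, v (m b) b)
    (ℓ : ℕ) (c : Fin (ℓ + 1) → I) (hinj : Function.Injective c) :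
    0 ≤ ∑ j : Fin (ℓ + 1), (v (m (c j)) (c j) - v (m (c j)) (c (j + 1))) := by
  classical
  let ι : Fin (ℓ + 1) ↪ I := ⟨c, hinj⟩
  let σ : Equiv.Perm I := (Equiv.addRight (1 : Fin (ℓ + 1))).viaEmbedding ι
  have hσ (j) : σ (c j) = c (j + 1) :=
    Equiv.Perm.viaEmbedding_apply (Equiv.addRight (1 : Fin (ℓ + 1))) ι j
  have hfix (b) (hb : b ∉ Set.range c) : σ b = b :=
    Equiv.Perm.viaEmbedding_apply_of_notMem (Equiv.addRight (1 : Fin (ℓ + 1))) ι b hb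
  have hrot : ∑ b, v (m b) (σ b) ≤ ∑ b, v (m b) b := by
    have h := hmax (σ.symm.trans m)
    rw [← Equiv.sum_comp σ] at h
    simpa using h
  have hcycle : ∑ j, (v (m (c j)) (c j) - v (m (c j)) (c (j + 1)))
      = ∑ b, (v (m b) b - v (m b) (σ b)) :=
    Fintype.sum_of_injective c hinj _ _ (fun b hb => by rw [hfix b hb, sub_self])
      (fun j => by rw [hσ])
  rw [hcycle, Finset.sum_sub_distrib]
  exact sub_nonneg.mpr hrot
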